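/- The unilateral clustering method H^U satisfies the Alternative Axiom of Value (A1'') and the Axiom of Transformation (A2). That is: (i) for the two-node network Δ₂(α,β) = ({p,q}, A) with A(p,q) = α, A(q,p) = β, α,β > 0, the unilateral ultrametric satisfies u^U(p,q) = min(α,β); and (ii) for any two networks (X, A_X) and (Y, A_Y) and any map φ : X → Y with A_X(x,x') ≥ A_Y(φ(x),φ(x')) for all x,x' ∈ X, the unilateral ultrametrics satisfy u^U_X(x,x') ≥ u^U_Y(φ(x),φ(x')) for all x,x' ∈ X. -/

import Mathlib

noncomputable section

/-- A dissimilarity function on a node set: nonnegative and zero exactly on the diagonal.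
It need not be symmetric nor satisfy the triangle inequality. -/
def IsDissim {X : Type} (A : X → X → ℝ) : Prop :=
  (∀ x x', 0 ≤ A x x') ∧ (∀ x x', A x x' = 0 ↔ x = x')

/-- A symmetric dissimilarity. -/
def IsSym {X : Type} (A : X → X → ℝ) : Prop := ∀ x x', A x x' = A x' x

/-- An ultrametric: nonnegative, zero exactly on the diagonal, symmetric, and
satisfying the strong triangle inequality. -/
def IsUltrametric {X : Type} (u : X → X → ℝ) : Prop :=
  (∀ x x', 0 ≤ u x x') ∧ (∀ x x', u x x' = 0 ↔ x = x') ∧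
    (∀ x x', u x x' = u x' x) ∧
    (∀ x x' x'', u x x'' ≤ max (u x x') (u x' x''))

/-- The cost of the chain `x :: l`: the maximum dissimilarity over consecutive links. -/
def chainCost {X : Type} (A : X → X → ℝ) : X → List X → ℝ
  | _, [] => 0
  | x, y :: l => max (A x y) (chainCost A y l)

/-- The set of costs of chains from `x` to `x'`. -/
def chainCosts {X : Type} (A : X → X → ℝ) (x x' : X) : Set ℝ :=
  {c | ∃ l : List X, (x :: l).getLast (List.cons_ne_nil x l) = x' ∧ chainCost A x l = c}

/-- The directed minimum chain cost `ũ*_X(x,x')`: minimum cost over all chains from `x` to `x'`. -/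
def minChainCost {X : Type} (A : X → X → ℝ) (x x' : X) : ℝ :=
  sInf (chainCosts A x x')

/-- The nonreciprocal ultrametric `u^NR`. -/
def nonrecipUltra {X : Type} (A : X → X → ℝ) (x x' : X) : ℝ :=
  max (minChainCost A x x') (minChainCost A x' x)

/-- The reciprocal ultrametric `u^R`. -/
def recipUltra {X : Type} (A : X → X → ℝ) (x x' : X) : ℝ :=
  minChainCost (fun a b => max (A a b) (A b a)) x x'

/-- The unilateral ultrametric `u^U`. -/
def uniUltra {X : Type} (A : X → X → ℝ) (x x' : X) : ℝ :=
  minChainCost (fun a b => min (A a b) (A b a)) x x'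

/-- The minimum loop cost `mlc(X, A_X)`: minimum cost over loops, i.e. chains from some
node `x` back to itself containing at least one node different from `x`. -/
def mlc {X : Type} (A : X → X → ℝ) : ℝ :=
  sInf {c | ∃ (x : X) (l : List X),
    (x :: l).getLast (List.cons_ne_nil x l) = x ∧ (∃ y ∈ l, y ≠ x) ∧ chainCost A x l = c}

/-- The separation `sep(X, A_X)`: minimum dissimilarity over pairs of distinct nodes. -/
def sep {X : Type} (A : X → X → ℝ) : ℝ :=
  sInf {c | ∃ x x' : X, x ≠ x' ∧ A x x' = c}

/-- A hierarchical clustering method: assigns to every (finite) network an output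
two-variable function on the same node set. -/
abbrev HCMethod := ∀ (X : Type) [Fintype X], (X → X → ℝ) → X → X → ℝ

/-- A hierarchical clustering method outputs an ultrametric on every network. -/
def IsHCMethod (H : HCMethod) : Prop :=
  ∀ (X : Type) [Fintype X] (A : X → X → ℝ), IsDissim A → IsUltrametric (H X A)

/-- `p, q` are the two (distinct) nodes of a two-node set. -/
def TwoNode {X : Type} (p q : X) : Prop := p ≠ q ∧ ∀ x : X, x = p ∨ x = q

/-- Axiom of Value (A1): on every two-node network the output clusters the two nodes at
the maximum of the two dissimilarities. -/
def AxiomValue (H : HCMethod) : Prop :=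
  ∀ (X : Type) [Fintype X] (p q : X), TwoNode p q →
    ∀ A : X → X → ℝ, IsDissim A → H X A p q = max (A p q) (A q p)

/-- Axiom of Transformation (A2): dissimilarity-reducing maps do not increase output values. -/
def AxiomTransform (H : HCMethod) : Prop :=
  ∀ (X Y : Type) [Fintype X] [Fintype Y] (AX : X → X → ℝ) (AY : Y → Y → ℝ),
    IsDissim AX → IsDissim AY →
    ∀ φ : X → Y, (∀ x x', AY (φ x) (φ x') ≤ AX x x') →
    ∀ x x' : X, H Y AY (φ x) (φ x') ≤ H X AX x x'

/-- The canonical dissimilarity `A_{n,α,β}` on `Fin n`: `α` for `i > j`, `β` for `i < j`,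
`0` on the diagonal. -/
def canonDissim (n : ℕ) (α β : ℝ) : Fin n → Fin n → ℝ :=
  fun i j => if i = j then 0 else if j < i then α else β

/-- Extended Axiom of Value (A1'): on every permuted canonical network `Δ_n(α,β,Π)` the
output ultrametric equals `max(α,β)` off the diagonal. -/
def ExtAxiomValue (H : HCMethod) : Prop :=
  ∀ (n : ℕ) (α β : ℝ), 0 < α → 0 < β → ∀ π : Equiv.Perm (Fin n),
    ∀ i j : Fin n, i ≠ j →
      H (Fin n) (fun i j => canonDissim n α β (π i) (π j)) i j = max α β

/-- Alternative Axiom of Value (A1''): on every two-node network the output clusters the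
two nodes at the minimum of the two dissimilarities. -/
def AltAxiomValue (H : HCMethod) : Prop :=
  ∀ (X : Type) [Fintype X] (p q : X), TwoNode p q →
    ∀ A : X → X → ℝ, IsDissim A → H X A p q = min (A p q) (A q p)

/-- Agnostic Axiom of Value (A1'''): on every two-node network the output value lies
between the minimum and maximum of the two dissimilarities. -/
def AgnAxiomValue (H : HCMethod) : Prop :=
  ∀ (X : Type) [Fintype X] (p q : X), TwoNode p q →
    ∀ A : X → X → ℝ, IsDissim A →
      min (A p q) (A q p) ≤ H X A p q ∧ H X A p q ≤ max (A p q) (A q p)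

/-!
The lower bound for a two-node network is a cut argument: a chain leaving a set `S` must take a step
from `S` to its complement, so it costs at least the cheapest such step; here `S = {p}`. The
transformation axiom holds because `φ` maps the chains from `x` to `x'` to chains from `φ x` to
`φ x'` without raising their cost, and a dissimilarity-reducing map also reduces the symmetrized
dissimilarities `min (A a b) (A b a)`.
-/

section ChainCost

variable {X Y : Type}

theorem chainCost_nonneg (A : X → X → ℝ) (x : X) (l : List X) : 0 ≤ chainCost A x l := by
  induction l generalizing x with
  | nil => exact le_rfl
  | cons y l ih => exact le_max_of_le_right (ih y)

theorem chainCost_mono {A B : X → X → ℝ} (h : ∀ a b, A a b ≤ B a b) (x : X) (l : List X) :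
    chainCost A x l ≤ chainCost B x l := by
  induction l generalizing x with
  | nil => exact le_rfl
  | cons y l ih => exact max_le_max (h x y) (ih y)

theorem chainCost_map (B : Y → Y → ℝ) (φ : X → Y) (x : X) (l : List X) :
    chainCost B (φ x) (l.map φ) = chainCost (fun a b => B (φ a) (φ b)) x l := by
  induction l generalizing x with
  | nil => rfl
  | cons y l ih => exact congrArg (max (B (φ x) (φ y))) (ih y)

theorem le_chainCost_of_cut {A : X → X → ℝ} {S : Set X} {c : ℝ}
    (hcut : ∀ a ∈ S, ∀ b ∉ S, c ≤ A a b) {x : X} (hx : x ∈ S) {l : List X}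
    (hl : (x :: l).getLast (List.cons_ne_nil x l) ∉ S) : c ≤ chainCost A x l := by
  induction l generalizing x with
  | nil => exact absurd hx hl
  | cons y l ih =>
    by_cases hy : y ∈ S
    · exact le_max_of_le_right (ih hy hl)
    · exact le_max_of_le_left (hcut x hx y hy)

end ChainCost

section MinChainCost

variable {X Y : Type}

theorem bddBelow_chainCosts (A : X → X → ℝ) (x x' : X) : BddBelow (chainCosts A x x') :=
  ⟨0, by rintro _ ⟨l, -, rfl⟩; exact chainCost_nonneg A x l⟩

theorem chainCosts_nonempty (A : X → X → ℝ) (x x' : X) : (chainCosts A x x').Nonempty :=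
  ⟨chainCost A x [x'], [x'], rfl, rfl⟩

theorem minChainCost_le_chainCost (A : X → X → ℝ) {x x' : X} {l : List X}
    (hl : (x :: l).getLast (List.cons_ne_nil x l) = x') :
    minChainCost A x x' ≤ chainCost A x l :=
  csInf_le (bddBelow_chainCosts A x x') ⟨l, hl, rfl⟩

theorem le_minChainCost {A : X → X → ℝ} {x x' : X} {c : ℝ}
    (h : ∀ l : List X, (x :: l).getLast (List.cons_ne_nil x l) = x' → c ≤ chainCost A x l) :
    c ≤ minChainCost A x x' :=
  le_csInf (chainCosts_nonempty A x x') (by rintro _ ⟨l, hl, rfl⟩; exact h l hl)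

theorem minChainCost_le_of_nonneg {A : X → X → ℝ} {x x' : X} (h : 0 ≤ A x x') :
    minChainCost A x x' ≤ A x x' :=
  calc
    minChainCost A x x' ≤ chainCost A x [x'] := minChainCost_le_chainCost A rfl
    _ = A x x' := max_eq_left h

theorem le_minChainCost_of_cut {A : X → X → ℝ} {S : Set X} {c : ℝ}
    (hcut : ∀ a ∈ S, ∀ b ∉ S, c ≤ A a b) {x x' : X} (hx : x ∈ S) (hx' : x' ∉ S) :
    c ≤ minChainCost A x x' :=
  le_minChainCost fun _ hl => le_chainCost_of_cut hcut hx (hl ▸ hx')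

theorem minChainCost_map_le {A : X → X → ℝ} {B : Y → Y → ℝ} {φ : X → Y}
    (h : ∀ a b, B (φ a) (φ b) ≤ A a b) (x x' : X) :
    minChainCost B (φ x) (φ x') ≤ minChainCost A x x' := by
  refine le_minChainCost fun l hl => ?_
  have hlast : (φ x :: l.map φ).getLast (List.cons_ne_nil _ _) = φ x' :=
    (List.getLast_map (f := φ) (l := x :: l) (List.cons_ne_nil _ _)).trans (congrArg φ hl)
  calc
    minChainCost B (φ x) (φ x') ≤ chainCost B (φ x) (l.map φ) := minChainCost_le_chainCost B hlast
    _ = chainCost (fun a b => B (φ a) (φ b)) x l := chainCost_map B φ x l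
    _ ≤ chainCost A x l := chainCost_mono h x l

end MinChainCost

section Unilateral

variable {X Y : Type}

theorem TwoNode.minChainCost_eq {p q : X} (h : TwoNode p q) {A : X → X → ℝ} (hA : 0 ≤ A p q) :
    minChainCost A p q = A p q := by
  have hcut : ∀ a ∈ ({p} : Set X), ∀ b ∉ ({p} : Set X), A p q ≤ A a b := by
    rintro a rfl b hb
    rw [(h.2 b).resolve_left hb]
  exact le_antisymm (minChainCost_le_of_nonneg hA)
    (le_minChainCost_of_cut hcut (Set.mem_singleton p) h.1.symm)

theorem TwoNode.uniUltra_eq {p q : X} (h : TwoNode p q) {A : X → X → ℝ}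
    (hpq : 0 ≤ A p q) (hqp : 0 ≤ A q p) : uniUltra A p q = min (A p q) (A q p) :=
  h.minChainCost_eq (A := fun a b => min (A a b) (A b a)) (le_min hpq hqp)

theorem uniUltra_map_le {A : X → X → ℝ} {B : Y → Y → ℝ} {φ : X → Y}
    (h : ∀ a b, B (φ a) (φ b) ≤ A a b) (x x' : X) :
    uniUltra B (φ x) (φ x') ≤ uniUltra A x x' :=
  minChainCost_map_le (A := fun a b => min (A a b) (A b a)) (B := fun a b => min (B a b) (B b a))
    (fun a b => min_le_min (h a b) (h b a)) x x'

end Unilateral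

theorem unilateral_admissible_general :
    (∀ (X : Type) (p q : X), TwoNode p q →
        ∀ A : X → X → ℝ, 0 ≤ A p q → 0 ≤ A q p → uniUltra A p q = min (A p q) (A q p)) ∧
    (∀ (X Y : Type) (AX : X → X → ℝ) (AY : Y → Y → ℝ) (φ : X → Y),
        (∀ x x', AY (φ x) (φ x') ≤ AX x x') →
        ∀ x x' : X, uniUltra AY (φ x) (φ x') ≤ uniUltra AX x x') :=
  ⟨fun _ _ _ h _ hpq hqp => h.uniUltra_eq hpq hqp, fun _ _ _ _ _ hφ => uniUltra_map_le hφ⟩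

/-- Unilateral clustering satisfies the Alternative Axiom of Value (A1'') and
the Axiom of Transformation (A2). -/
theorem unilateral_admissible :
    (∀ (X : Type) [Fintype X] (p q : X), TwoNode p q →
        ∀ A : X → X → ℝ, IsDissim A → uniUltra A p q = min (A p q) (A q p)) ∧
    (∀ (X Y : Type) [Fintype X] [Fintype Y]
        (AX : X → X → ℝ) (AY : Y → Y → ℝ), IsDissim AX → IsDissim AY →
        ∀ φ : X → Y, (∀ x x', AY (φ x) (φ x') ≤ AX x x') →
        ∀ x x' : X, uniUltra AY (φ x) (φ x') ≤ uniUltra AX x x') := by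
  exact ⟨fun X _ p q h A hA => unilateral_admissible_general.1 X p q h A (hA.1 p q) (hA.1 q p),
    fun X Y _ _ AX AY _ _ => unilateral_admissible_general.2 X Y AX AY⟩
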